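/- Let d ≥ 1, T > 0 and k, l ∈ ℝ with l < k − 2. Then there is no constant C > 0 such that for all bounded measurable sets A, B ⊆ ℝ^d one has sup_{t ∈ [0,T]} ‖ ∫₀ᵗ ∫_{ℝ^d} (⟨ξ⟩^k / (⟨ξ₁⟩^k ⟨ξ−ξ₁⟩^l)) · cos(s(|ξ|² − |ξ₁|²)) · cos(s|ξ−ξ₁|) · χ_A(ξ₁) χ_B(ξ−ξ₁) dξ₁ ds ‖_{L²_ξ(ℝ^d)} ≤ C(|A| + |B|). (This is the quantitative content of the case l < k − 2 of the C² ill-posedness of the solution map of the Zakharov system at the origin of H^k × H^l × H^{l−1}.) -/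

import Mathlib

/-!
The estimate is violated by fixed-size balls in a high-low interaction observed at a very short
time. Let `A` be the closed unit ball at the origin and `B` the closed ball of radius `2` about a
point `p` with `‖p‖ = N`. For `ξ` in the unit ball about `p`, every `ξ₁ ∈ A` has `ξ - ξ₁ ∈ B`, and
the weight is at least a constant times `N ^ (k - l)` (`weight_lower`). The time phases are
`O(s N²)`, so for `0 ≤ s ≤ t := 1 / (4 N²)` both cosines are at least `1 / 2` and there is no
cancellation: the double integral is at least a constant times
`N ^ (k - l) * t ≈ N ^ (k - l - 2)` (`integral_lower`). The volumes of `A`, `B` and of the ball of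
`ξ` do not depend on `N`, while `k - l - 2 > 0`, so letting `N → ∞` excludes every `C`.
-/

open MeasureTheory

/-- The Japanese bracket `⟨ξ⟩ = √(1+|ξ|²)`. -/
noncomputable def jb {d : ℕ} (ξ : EuclideanSpace ℝ (Fin d)) : ℝ :=
  Real.sqrt (1 + ‖ξ‖ ^ 2)

/-- If `x` and `N` are comparable up to a factor `2`, then `x ^ a` is bounded below by `N ^ a` up to a
factor `2 ^ |a|`, whatever the sign of `a`. -/
lemma rpow_lower {N x a : ℝ} (hN : 0 < N) (h1 : N / 2 ≤ x) (h2 : x ≤ 2 * N) :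
    (2 : ℝ) ^ (-|a|) * N ^ a ≤ x ^ a := by
  have hx : 0 < x := by linarith
  rw [Real.rpow_def_of_pos hN, Real.rpow_def_of_pos hx, Real.rpow_def_of_pos two_pos,
    ← Real.exp_add]
  apply Real.exp_le_exp.2
  have e1 : Real.log N - Real.log 2 ≤ Real.log x := by
    rw [← Real.log_div hN.ne' two_ne_zero]
    exact Real.log_le_log (by positivity) h1
  have e2 : Real.log x ≤ Real.log 2 + Real.log N := by
    rw [← Real.log_mul two_ne_zero hN.ne']
    exact Real.log_le_log hx h2
  rcases abs_cases a with ⟨h, h'⟩ | ⟨h, h'⟩ <;> rw [h] <;> nlinarith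

section jb
variable {d : ℕ}

lemma norm_le_jb (ξ : EuclideanSpace ℝ (Fin d)) : ‖ξ‖ ≤ jb ξ :=
  Real.le_sqrt_of_sq_le (by linarith)

lemma one_le_jb (ξ : EuclideanSpace ℝ (Fin d)) : 1 ≤ jb ξ :=
  Real.le_sqrt_of_sq_le (by nlinarith [sq_nonneg ‖ξ‖])

lemma jb_le (ξ : EuclideanSpace ℝ (Fin d)) : jb ξ ≤ 1 + ‖ξ‖ :=
  Real.sqrt_le_iff.2 ⟨by positivity, by nlinarith [norm_nonneg ξ]⟩

lemma continuous_jb : Continuous (jb : EuclideanSpace ℝ (Fin d) → ℝ) := by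
  unfold jb
  fun_prop

/-- For a high output frequency `ξ` of size about `N`, a low frequency `ξ₁` and a high frequency
`ξ - ξ₁`, the weight of the bilinear form has size at least about `N ^ (k - l)`. -/
lemma weight_lower {N k l : ℝ} (hN : 4 ≤ N) {ξ ξ₁ : EuclideanSpace ℝ (Fin d)}
    (h1 : N - 1 ≤ ‖ξ‖) (h2 : ‖ξ‖ ≤ N + 1) (h3 : ‖ξ₁‖ ≤ 1) :
    (2 : ℝ) ^ (-(2 * |k| + |l|)) * N ^ (k - l) ≤
      jb ξ ^ k / (jb ξ₁ ^ k * jb (ξ - ξ₁) ^ l) := by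
  have hN0 : 0 < N := by linarith
  have h4 : ‖ξ - ξ₁‖ ≤ N + 2 := (norm_sub_le _ _).trans (by linarith)
  have h5 : N - 2 ≤ ‖ξ - ξ₁‖ := by linarith [norm_sub_norm_le ξ ξ₁]
  have a1 := rpow_lower (a := k) hN0 (x := jb ξ) (by linarith [norm_le_jb ξ])
    (by linarith [jb_le ξ])
  have a2 := rpow_lower (a := -k) one_pos (x := jb ξ₁) (by linarith [one_le_jb ξ₁])
    (by linarith [jb_le ξ₁])
  have a3 := rpow_lower (a := -l) hN0 (x := jb (ξ - ξ₁)) (by linarith [norm_le_jb (ξ - ξ₁)])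
    (by linarith [jb_le (ξ - ξ₁)])
  have p0 : 0 < jb ξ := by linarith [one_le_jb ξ]
  have p1 : 0 < jb ξ₁ := by linarith [one_le_jb ξ₁]
  have p2 : 0 < jb (ξ - ξ₁) := by linarith [one_le_jb (ξ - ξ₁)]
  rw [Real.one_rpow, mul_one, abs_neg] at a2
  rw [abs_neg] at a3
  calc (2 : ℝ) ^ (-(2 * |k| + |l|)) * N ^ (k - l)
      = (2 ^ (-|k|) * N ^ k) * (2 ^ (-|k|) * (2 ^ (-|l|) * N ^ (-l))) := by
        rw [show -(2 * |k| + |l|) = -|k| + -|k| + -|l| by ring, Real.rpow_add two_pos,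
          Real.rpow_add two_pos, sub_eq_add_neg k l, Real.rpow_add hN0]
        ring
    _ ≤ jb ξ ^ k * (jb ξ₁ ^ (-k) * jb (ξ - ξ₁) ^ (-l)) := by gcongr
    _ = _ := by
        rw [Real.rpow_neg p1.le, Real.rpow_neg p2.le, div_eq_mul_inv, mul_inv]

end jb

lemma half_le_cos {x : ℝ} (h : |x| ≤ 1) : 1 / 2 ≤ Real.cos x := by
  have := Real.one_sub_sq_div_two_le_cos (x := x)
  have := (sq_le_one_iff_abs_le_one x).2 h
  linarith

/-- Pointwise lower bound for the bilinear expression at time `1 / (4 N²)`, for `ξ` in the unit ball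
around the center `p` of `B`. -/
lemma integral_lower {d : ℕ} {N k l : ℝ} (hN : 4 ≤ N) {p ξ : EuclideanSpace ℝ (Fin d)}
    (hp : ‖p‖ = N) (hξ : ξ ∈ Metric.closedBall p 1) :
    (2 : ℝ) ^ (-(2 * |k| + |l|)) / 16 *
        volume.real (Metric.closedBall (0 : EuclideanSpace ℝ (Fin d)) 1) * N ^ (k - l - 2) ≤
      ∫ s in (0 : ℝ)..(1 / (4 * N ^ 2)), ∫ ξ₁,
            jb ξ ^ k / (jb ξ₁ ^ k * jb (ξ - ξ₁) ^ l) *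
              Real.cos (s * (‖ξ‖ ^ 2 - ‖ξ₁‖ ^ 2)) * Real.cos (s * ‖ξ - ξ₁‖) *
              (Metric.closedBall (0 : EuclideanSpace ℝ (Fin d)) 1).indicator
                (fun _ => (1 : ℝ)) ξ₁ *
              (Metric.closedBall p 2).indicator (fun _ => (1 : ℝ)) (ξ - ξ₁) := by
  have hN0 : 0 < N := by linarith
  have hd : ‖ξ - p‖ ≤ 1 := by simpa [dist_eq_norm] using hξ
  have h1 : N - 1 ≤ ‖ξ‖ := by
    have := norm_sub_norm_le p ξ
    rw [norm_sub_rev] at this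
    linarith
  have h2 : ‖ξ‖ ≤ N + 1 := by linarith [norm_sub_norm_le ξ p]
  set K := Metric.closedBall (0 : EuclideanSpace ℝ (Fin d)) 1 with hK
  have hKc : IsCompact K := isCompact_closedBall _ _
  let g : ℝ → EuclideanSpace ℝ (Fin d) → ℝ := fun s ξ₁ =>
    jb ξ ^ k / (jb ξ₁ ^ k * jb (ξ - ξ₁) ^ l) *
      Real.cos (s * (‖ξ‖ ^ 2 - ‖ξ₁‖ ^ 2)) * Real.cos (s * ‖ξ - ξ₁‖)
  have pos : ∀ η : EuclideanSpace ℝ (Fin d), 0 < jb η := fun η => by linarith [one_le_jb η]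
  have hg : Continuous (Function.uncurry g) := by
    have c1 : Continuous fun q : ℝ × EuclideanSpace ℝ (Fin d) => jb q.2 ^ k :=
      (continuous_jb.comp continuous_snd).rpow_const fun q => Or.inl (pos _).ne'
    have c2 : Continuous fun q : ℝ × EuclideanSpace ℝ (Fin d) => jb (ξ - q.2) ^ l :=
      (continuous_jb.comp (continuous_const.sub continuous_snd)).rpow_const
        fun q => Or.inl (pos _).ne'
    have c3 : Continuous fun q : ℝ × EuclideanSpace ℝ (Fin d) =>
        jb ξ ^ k / (jb q.2 ^ k * jb (ξ - q.2) ^ l) :=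
      continuous_const.div (c1.mul c2) fun q =>
        (mul_pos (Real.rpow_pos_of_pos (pos _) _) (Real.rpow_pos_of_pos (pos _) _)).ne'
    exact (c3.mul (by fun_prop)).mul (by fun_prop)
  -- On the unit ball the indicator of `B` is identically one, so only the first cutoff remains.
  have hin : ∀ s : ℝ, (∫ ξ₁, jb ξ ^ k / (jb ξ₁ ^ k * jb (ξ - ξ₁) ^ l) *
              Real.cos (s * (‖ξ‖ ^ 2 - ‖ξ₁‖ ^ 2)) * Real.cos (s * ‖ξ - ξ₁‖) *
              K.indicator (fun _ => (1 : ℝ)) ξ₁ *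
              (Metric.closedBall p 2).indicator (fun _ => (1 : ℝ)) (ξ - ξ₁)) =
      ∫ ξ₁ in K, g s ξ₁ := by
    intro s
    rw [← integral_indicator hKc.measurableSet]
    congr 1
    ext ξ₁
    by_cases h : ξ₁ ∈ K
    · have h3 : ‖ξ₁‖ ≤ 1 := by simpa [hK] using h
      have : ξ - ξ₁ ∈ Metric.closedBall p 2 := by
        rw [Metric.mem_closedBall, dist_eq_norm, sub_right_comm]
        linarith [norm_sub_le (ξ - p) ξ₁]
      simp [h, this, g]
    · simp [h]
  simp_rw [hin]
  set m := (2 : ℝ) ^ (-(2 * |k| + |l|)) * N ^ (k - l) with hm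
  have hm0 : 0 ≤ m := by positivity
  have ht : (0 : ℝ) ≤ 1 / (4 * N ^ 2) := by positivity
  have hcont : Continuous fun s => ∫ ξ₁ in K, g s ξ₁ :=
    continuous_parametric_integral_of_continuous hg hKc
  have key : ∀ s ∈ Set.Icc (0 : ℝ) (1 / (4 * N ^ 2)), m / 4 * volume.real K ≤
      ∫ ξ₁ in K, g s ξ₁ := by
    intro s hs
    have hsN : s * (4 * N ^ 2) ≤ 1 := by
      have := hs.2
      rwa [le_div_iff₀ (by positivity)] at this
    apply setIntegral_ge_of_const_le_real hKc.measurableSet hKc.measure_lt_top.ne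
    · intro ξ₁ hξ₁
      have h3 : ‖ξ₁‖ ≤ 1 := by simpa [hK] using hξ₁
      have h4 : ‖ξ - ξ₁‖ ≤ N + 2 := (norm_sub_le _ _).trans (by linarith)
      have w := weight_lower (k := k) (l := l) hN h1 h2 h3
      have c1 : 1 / 2 ≤ Real.cos (s * (‖ξ‖ ^ 2 - ‖ξ₁‖ ^ 2)) := by
        apply half_le_cos
        rw [abs_mul, abs_of_nonneg hs.1]
        refine le_trans (mul_le_mul_of_nonneg_left ?_ hs.1) hsN
        rw [abs_le]
        constructor <;> nlinarith [norm_nonneg ξ₁, norm_nonneg ξ]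
      have c2 : 1 / 2 ≤ Real.cos (s * ‖ξ - ξ₁‖) := by
        apply half_le_cos
        rw [abs_mul, abs_of_nonneg hs.1, abs_norm]
        refine le_trans (mul_le_mul_of_nonneg_left ?_ hs.1) hsN
        nlinarith
      calc m / 4 = m * (1 / 2) * (1 / 2) := by ring
        _ ≤ g s ξ₁ := by
          have w0 := hm0.trans w
          have c0 : 0 ≤ Real.cos (s * (‖ξ‖ ^ 2 - ‖ξ₁‖ ^ 2)) := by linarith
          exact mul_le_mul (mul_le_mul w c1 (by norm_num) w0) c2 (by norm_num) (mul_nonneg w0 c0)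
    · exact (hg.comp (by fun_prop : Continuous fun ξ₁ => (s, ξ₁))).continuousOn.integrableOn_compact
        hKc
  have := intervalIntegral.integral_mono_on ht (intervalIntegrable_const (μ := volume))
    (hcont.intervalIntegrable _ _) key
  rw [intervalIntegral.integral_const, smul_eq_mul, sub_zero] at this
  refine le_trans (le_of_eq ?_) this
  have : N ^ (k - l - 2) = N ^ (k - l) / N ^ 2 := by
    rw [Real.rpow_sub hN0 (k - l), Real.rpow_two]
  rw [this, hm]
  field_simp
  ring

/-- Case `l < k − 2` of the `C²` ill-posedness of the solution map of the
Zakharov system: the bilinear estimate coming from the second Gâteaux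
derivative of the Schrödinger component, uniform in `t ∈ [0,T]`, fails. -/
theorem solution_map_not_C2_low_l
    (d : ℕ) (hd : 1 ≤ d) (T : ℝ) (hT : 0 < T) (k l : ℝ) (hl : l < k - 2) :
    ¬ ∃ C > 0, ∀ A B : Set (EuclideanSpace ℝ (Fin d)),
      MeasurableSet A → MeasurableSet B →
      Bornology.IsBounded A → Bornology.IsBounded B →
      (⨆ t ∈ Set.Icc (0 : ℝ) T,
        eLpNorm
          (fun ξ => ∫ s in (0 : ℝ)..t, ∫ ξ₁,
            jb ξ ^ k / (jb ξ₁ ^ k * jb (ξ - ξ₁) ^ l) *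
              Real.cos (s * (‖ξ‖ ^ 2 - ‖ξ₁‖ ^ 2)) * Real.cos (s * ‖ξ - ξ₁‖) *
              A.indicator (fun _ => (1 : ℝ)) ξ₁ *
              B.indicator (fun _ => (1 : ℝ)) (ξ - ξ₁)) 2 volume) ≤
      ENNReal.ofReal (C * ((volume A).toReal + (volume B).toReal)) := by
  rintro ⟨C, hC, H⟩
  set V := volume.real (Metric.closedBall (0 : EuclideanSpace ℝ (Fin d)) 1) with hV
  set V2 := volume.real (Metric.closedBall (0 : EuclideanSpace ℝ (Fin d)) 2) with hV2
  have hVfin : volume (Metric.closedBall (0 : EuclideanSpace ℝ (Fin d)) 1) ≠ ⊤ :=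
    measure_closedBall_lt_top.ne
  have hVpos : 0 < V :=
    ENNReal.toReal_pos (Metric.measure_closedBall_pos volume _ one_pos).ne' hVfin
  set c := (2 : ℝ) ^ (-(2 * |k| + |l|)) / 16 * V with hc
  have hcpos : 0 < c := by positivity
  have bound : ∀ N : ℝ, 4 ≤ N → 1 / T ≤ N →
      c * N ^ (k - l - 2) * V ^ (1 / 2 : ℝ) ≤ C * (V + V2) := by
    intro N hN hNT
    have hN0 : 0 < N := by linarith
    let p : EuclideanSpace ℝ (Fin d) := EuclideanSpace.single ⟨0, hd⟩ N
    have hp : ‖p‖ = N := by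
      simp [p, abs_of_pos hN0]
    have ht : 1 / (4 * N ^ 2) ∈ Set.Icc (0 : ℝ) T := by
      refine ⟨by positivity, ?_⟩
      rw [div_le_iff₀ (by positivity)]
      rw [div_le_iff₀ hT] at hNT
      nlinarith
    have h := H (Metric.closedBall 0 1) (Metric.closedBall p 2) measurableSet_closedBall
      measurableSet_closedBall Metric.isBounded_closedBall Metric.isBounded_closedBall
    have h' := (le_iSup₂ (f := fun t (_ : t ∈ Set.Icc (0 : ℝ) T) => eLpNorm
          (fun ξ => ∫ s in (0 : ℝ)..t, ∫ ξ₁,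
            jb ξ ^ k / (jb ξ₁ ^ k * jb (ξ - ξ₁) ^ l) *
              Real.cos (s * (‖ξ‖ ^ 2 - ‖ξ₁‖ ^ 2)) * Real.cos (s * ‖ξ - ξ₁‖) *
              (Metric.closedBall (0 : EuclideanSpace ℝ (Fin d)) 1).indicator
                (fun _ => (1 : ℝ)) ξ₁ *
              (Metric.closedBall p 2).indicator (fun _ => (1 : ℝ)) (ξ - ξ₁)) 2 volume) _ ht).trans h
    have hmono : eLpNorm ((Metric.closedBall p 1).indicator fun _ => c * N ^ (k - l - 2)) 2
        (volume : Measure (EuclideanSpace ℝ (Fin d))) ≤ _ := le_trans (eLpNorm_mono fun ξ => by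
      by_cases hξ : ξ ∈ Metric.closedBall p 1
      · rw [Set.indicator_of_mem hξ, Real.norm_of_nonneg (by positivity)]
        exact (integral_lower (k := k) (l := l) hN hp hξ).trans (le_abs_self _)
      · rw [Set.indicator_of_notMem hξ, norm_zero]
        exact norm_nonneg _) h'
    rw [eLpNorm_indicator_const measurableSet_closedBall two_ne_zero ENNReal.ofNat_ne_top,
      Measure.addHaar_closedBall_center, Measure.addHaar_closedBall_center volume p 2,
      ← ENNReal.ofReal_toReal hVfin, Real.enorm_of_nonneg (by positivity),
      ENNReal.ofReal_rpow_of_nonneg ENNReal.toReal_nonneg (by positivity),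
      ← ENNReal.ofReal_mul (by positivity), ENNReal.ofReal_toReal hVfin,
      ENNReal.ofReal_le_ofReal_iff (by positivity)] at hmono
    rw [ENNReal.toReal_ofNat] at hmono
    exact hmono
  have lim := (((tendsto_rpow_atTop (show 0 < k - l - 2 by linarith)).const_mul_atTop
    hcpos).atTop_mul_const (Real.rpow_pos_of_pos hVpos (1 / 2 : ℝ)))
  obtain ⟨N, h1, h2, h3⟩ := ((lim.eventually_gt_atTop (C * (V + V2))).and
    ((Filter.eventually_ge_atTop 4).and (Filter.eventually_ge_atTop (1 / T)))).exists
  exact absurd (bound N h2 h3) (not_le.2 h1)
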